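/- Consider a sequence of M-layer models indexed by M on a fixed finite simple graph G = (V,E), with no link thinning (p_ℓ(M) = 1 for all ℓ), node activation probabilities q_i(M) = d M^{−1/2} for all i ∈ V with a fixed constant d > 0, and threshold K = 1 (so X_ℓ = 1 iff W_ℓ ≥ 1). Then for every link configuration x : E → {0,1}, writing 𝓔 = {ℓ ∈ E : x_ℓ = 1}: lim_{M→∞} P[X_ℓ = x_ℓ for all ℓ ∈ E] = e^{−d² (|E| − |𝓔|)} (1 − e^{−d²})^{|𝓔|}. -/

import Mathlib

open MeasureTheory Filter Finset

open scoped Classical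

/-- Bernoulli measure on `Bool` with success probability `p`. -/
noncomputable def bern (p : ℝ) : Measure Bool :=
  ENNReal.ofReal p • Measure.dirac true + ENNReal.ofReal (1 - p) • Measure.dirac false

/-- The `M`-layer model without link thinning: only the node activation variables
`Z_{m,i}`, each node active on each layer independently with probability `q i`. -/
noncomputable def nodeμ (V : Type) [Fintype V] (M : ℕ) (q : V → ℝ) :
    Measure ((Fin M × V) → Bool) :=
  Measure.pi fun k => bern (q k.2)

/-- `W_ℓ` for `ℓ = (i,j)`: the number of layers on which both `i` and `j` are active. -/
noncomputable def Wnd {V : Type} {M : ℕ} (ℓ : V × V) (ω : (Fin M × V) → Bool) : ℕ :=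
  (Finset.univ.filter fun m : Fin M => ω (m, ℓ.1) = true ∧ ω (m, ℓ.2) = true).card

/-!
On a single layer, a link `ℓ = (i, j)` is realised with probability `q_i q_j = (c ℓ + o(1)) / M`,
while two distinct links involve at least three nodes and are realised together with probability
`o(1 / M)`. By Bonferroni some link of `S ⊆ E` is realised on a given layer with probability
`(∑ ℓ ∈ S, c ℓ + o(1)) / M`, so the probability that over `M` independent layers no link of `S` is
ever realised tends to `∏ ℓ ∈ S, exp (-c ℓ)`. These avoidance probabilities are those of independent
links, and they determine the limiting probability of every link configuration.
-/

section RareEvents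

variable {α ι : Type*} {l : Filter α} {Ω : α → Type*} [∀ a, MeasurableSpace (Ω a)]
  {P : ∀ a, Measure (Ω a)} [∀ a, IsFiniteMeasure (P a)] {A : ∀ a, ι → Set (Ω a)}

theorem tendsto_mul_measureReal_biUnion {w : α → ℝ} (hw : ∀ a, 0 ≤ w a)
    (hA : ∀ a i, MeasurableSet (A a i)) {c : ι → ℝ} (S : Finset ι)
    (hc : ∀ i ∈ S, Tendsto (fun a => w a * (P a).real (A a i)) l (nhds (c i)))
    (hpair : (S : Set ι).Pairwise fun i j =>
      Tendsto (fun a => w a * (P a).real (A a i ∩ A a j)) l (nhds 0)) :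
    Tendsto (fun a => w a * (P a).real (⋃ i ∈ S, A a i)) l (nhds (∑ i ∈ S, c i)) := by
  induction S using Finset.induction_on with
  | empty => simp [tendsto_const_nhds]
  | insert i S hi ih =>
    have hS := ih (fun j hj => hc j (mem_insert_of_mem hj))
      (hpair.mono (coe_subset.2 (subset_insert i S)))
    have hoverlap :
        Tendsto (fun a => w a * (P a).real (A a i ∩ ⋃ j ∈ S, A a j)) l (nhds 0) := by
      have hsum : Tendsto (fun a => ∑ j ∈ S, w a * (P a).real (A a i ∩ A a j)) l (nhds 0) := by
        simpa only [sum_const_zero] using tendsto_finsetSum S fun j hj =>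
          hpair (mem_insert_self i S) (mem_insert_of_mem hj) (ne_of_mem_of_not_mem hj hi).symm
      refine squeeze_zero (fun a => mul_nonneg (hw a) measureReal_nonneg) (fun a => ?_) hsum
      rw [Set.inter_iUnion₂, ← mul_sum]
      exact mul_le_mul_of_nonneg_left (measureReal_biUnion_finset_le S _) (hw a)
    have hadd := ((hc i (mem_insert_self i S)).add hS).sub hoverlap
    rw [sub_zero, ← sum_insert hi] at hadd
    refine hadd.congr fun a => ?_
    rw [Finset.set_biUnion_insert, ← mul_add, ← mul_sub,
      ← measureReal_union_add_inter' (hA a i) (measure_ne_top _ _) (measure_ne_top _ _),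
      add_sub_cancel_right]

theorem tendsto_measureReal_inter_compl_of_avoidance (hA : ∀ a i, MeasurableSet (A a i))
    {r : ι → ℝ} {T S : Finset ι} (hTS : Disjoint T S)
    (havoid : ∀ U ⊆ T ∪ S,
      Tendsto (fun a => (P a).real (⋂ i ∈ U, (A a i)ᶜ)) l (nhds (∏ i ∈ U, r i))) :
    Tendsto (fun a => (P a).real ((⋂ i ∈ T, A a i) ∩ ⋂ i ∈ S, (A a i)ᶜ)) l
      (nhds ((∏ i ∈ T, (1 - r i)) * ∏ i ∈ S, r i)) := by
  induction T using Finset.induction_on generalizing S with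
  | empty => simpa using havoid S (by simp)
  | insert i T hi ih =>
    obtain ⟨hiS, hTS⟩ := disjoint_insert_left.1 hTS
    have hfree := ih hTS fun U hU => havoid U (hU.trans (by grind))
    have hmiss := ih (disjoint_insert_right.2 ⟨hi, hTS⟩) fun U hU => havoid U (hU.trans (by grind))
    have hlim : (∏ j ∈ insert i T, (1 - r j)) * ∏ j ∈ S, r j =
        (∏ j ∈ T, (1 - r j)) * ∏ j ∈ S, r j -
          (∏ j ∈ T, (1 - r j)) * ∏ j ∈ insert i S, r j := by
      rw [prod_insert hi, prod_insert hiS]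
      ring
    rw [hlim]
    refine (hfree.sub hmiss).congr fun a => ?_
    set F := (⋂ j ∈ T, A a j) ∩ ⋂ j ∈ S, (A a j)ᶜ
    have hhit : (⋂ j ∈ insert i T, A a j) ∩ ⋂ j ∈ S, (A a j)ᶜ = F ∩ A a i := by
      rw [Finset.set_biInter_insert, Set.inter_assoc, Set.inter_comm]
    have hnot : (⋂ j ∈ T, A a j) ∩ ⋂ j ∈ insert i S, (A a j)ᶜ = F \ A a i := by
      rw [Finset.set_biInter_insert, Set.inter_left_comm, Set.inter_comm, Set.sdiff_eq]
    rw [hhit, hnot, ← measureReal_inter_add_sdiff (s := F) (hA a i), add_sub_cancel_right]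

theorem tendsto_measureReal_pattern_of_avoidance (hA : ∀ a i, MeasurableSet (A a i))
    {r : ι → ℝ} {E : Finset ι} (p : ι → Prop) [DecidablePred p]
    (havoid : ∀ U ⊆ E,
      Tendsto (fun a => (P a).real (⋂ i ∈ U, (A a i)ᶜ)) l (nhds (∏ i ∈ U, r i))) :
    Tendsto (fun a => (P a).real {ω | ∀ i ∈ E, (ω ∈ A a i ↔ p i)}) l
      (nhds (∏ i ∈ E, if p i then 1 - r i else r i)) := by
  rw [prod_ite]
  refine (tendsto_measureReal_inter_compl_of_avoidance hA (disjoint_filter_filter_not E E p)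
    fun U hU => havoid U (by grind)).congr fun a => ?_
  congr 1
  ext ω
  simp only [Set.mem_inter_iff, Set.mem_iInter, mem_filter, Set.mem_compl_iff, Set.mem_ofPred_eq]
  grind

end RareEvents

section IndependentTrials

variable {ι : Type*} {Ω : ℕ → Type*} [∀ n, MeasurableSpace (Ω n)] {μ : ∀ n, Measure (Ω n)}
  {A : ∀ n, ι → Set (Ω n)}

theorem measureReal_pi_forall_notMem {κ X : Type*} [Fintype κ] [MeasurableSpace X]
    (ν : Measure X) [IsProbabilityMeasure ν] {s : Set X} (hs : MeasurableSet s) :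
    (Measure.pi fun _ : κ => ν).real {ω | ∀ k, ω k ∉ s} = (1 - ν.real s) ^ Fintype.card κ := by
  have hset : {ω : κ → X | ∀ k, ω k ∉ s} = Set.univ.pi fun _ => sᶜ := by
    ext ω
    simp
  rw [hset, measureReal_def, Measure.pi_pi, ENNReal.toReal_prod, prod_const, card_univ,
    ← measureReal_def, probReal_compl_eq_one_sub hs]

theorem tendsto_measureReal_pi_avoid (hμ : ∀ᶠ n in atTop, IsProbabilityMeasure (μ n))
    {B : ∀ n, Set (Ω n)} (hB : ∀ n, MeasurableSet (B n)) {c : ℝ}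
    (hc : Tendsto (fun n : ℕ => n * (μ n).real (B n)) atTop (nhds c)) :
    Tendsto (fun n => (Measure.pi fun _ : Fin n => μ n).real {ω | ∀ m, ω m ∉ B n}) atTop
      (nhds (Real.exp (-c))) := by
  have hneg : Tendsto (fun n : ℕ => n * -(μ n).real (B n)) atTop (nhds (-c)) := by
    simpa only [mul_neg] using hc.neg
  refine (Real.tendsto_one_add_pow_exp_of_tendsto hneg).congr' ?_
  filter_upwards [hμ] with n hn
  rw [measureReal_pi_forall_notMem (μ n) (hB n), Fintype.card_fin, sub_eq_add_neg]

theorem tendsto_measureReal_pi_pattern [∀ n, IsFiniteMeasure (μ n)]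
    (hμ : ∀ᶠ n in atTop, IsProbabilityMeasure (μ n))
    (hA : ∀ n i, MeasurableSet (A n i)) {c : ι → ℝ} {E : Finset ι}
    (hc : ∀ i ∈ E, Tendsto (fun n : ℕ => n * (μ n).real (A n i)) atTop (nhds (c i)))
    (hpair : (E : Set ι).Pairwise fun i j =>
      Tendsto (fun n : ℕ => n * (μ n).real (A n i ∩ A n j)) atTop (nhds 0))
    (p : ι → Prop) [DecidablePred p] :
    Tendsto (fun n => (Measure.pi fun _ : Fin n => μ n).real
        {ω | ∀ i ∈ E, ((∃ m, ω m ∈ A n i) ↔ p i)}) atTop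
      (nhds (∏ i ∈ E, if p i then 1 - Real.exp (-c i) else Real.exp (-c i))) := by
  refine tendsto_measureReal_pattern_of_avoidance (P := fun n => Measure.pi fun _ : Fin n => μ n)
    (A := fun n i => {ω | ∃ m, ω m ∈ A n i}) (fun n i => ?_) p fun U hU => ?_
  · simp only [Set.ofPred_exists]
    exact MeasurableSet.iUnion fun m => measurable_pi_apply m (hA n i)
  · have hunion := tendsto_mul_measureReal_biUnion (fun n : ℕ => n.cast_nonneg) hA U
      (fun i hi => hc i (hU hi)) (hpair.mono (coe_subset.2 hU))
    have havoid := tendsto_measureReal_pi_avoid hμ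
      (fun n => U.measurableSet_biUnion fun i _ => hA n i) hunion
    rw [← sum_neg_distrib, Real.exp_sum] at havoid
    refine havoid.congr fun n => ?_
    congr 1
    ext ω
    simp only [Set.mem_ofPred_eq, Set.mem_iUnion, Set.mem_iInter, Set.mem_compl_iff]
    grind

end IndependentTrials

section SingleLayer

variable {V : Type*}

/-- The event that both ends of the link `ℓ` are active, for the node configuration `z` of a single
layer. -/
def linkEvent (ℓ : V × V) : Set (V → Bool) := {z | z ℓ.1 = true ∧ z ℓ.2 = true}

theorem exists_node_notMem_of_ne {ℓ ℓ' : V × V} (hℓ' : ℓ'.1 ≠ ℓ'.2) (hne : ℓ ≠ ℓ')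
    (hswap : ℓ.swap ≠ ℓ') : ∃ v, (v = ℓ'.1 ∨ v = ℓ'.2) ∧ v ≠ ℓ.1 ∧ v ≠ ℓ.2 := by
  by_contra! h
  have h1 := h ℓ'.1 (.inl rfl)
  have h2 := h ℓ'.2 (.inr rfl)
  grind [Prod.ext_iff]

theorem bern_real_true {p : ℝ} (hp : 0 ≤ p) : (bern p).real {true} = p := by
  simp [bern, measureReal_def, hp]

instance isFiniteMeasure_bern (p : ℝ) : IsFiniteMeasure (bern p) := by
  constructor
  simp [bern]

theorem isProbabilityMeasure_bern {p : ℝ} (h0 : 0 ≤ p) (h1 : p ≤ 1) :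
    IsProbabilityMeasure (bern p) := by
  constructor
  simp [bern, ← ENNReal.ofReal_add h0 (sub_nonneg.2 h1)]

variable [Fintype V]

/-- The law of the node activations on a single layer. -/
noncomputable def layerμ (q : V → ℝ) : Measure (V → Bool) := Measure.pi fun v => bern (q v)

instance isFiniteMeasure_layerμ (q : V → ℝ) : IsFiniteMeasure (layerμ q) := by
  unfold layerμ
  infer_instance

theorem isProbabilityMeasure_layerμ {q : V → ℝ} (h0 : ∀ v, 0 ≤ q v) (h1 : ∀ v, q v ≤ 1) :
    IsProbabilityMeasure (layerμ q) := by
  have := fun v => isProbabilityMeasure_bern (h0 v) (h1 v)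
  unfold layerμ
  infer_instance

theorem layerμ_real_forall_active {q : V → ℝ} (h0 : ∀ v, 0 ≤ q v) (h1 : ∀ v, q v ≤ 1)
    (U : Finset V) : (layerμ q).real {z | ∀ v ∈ U, z v = true} = ∏ v ∈ U, q v := by
  have := fun v => isProbabilityMeasure_bern (h0 v) (h1 v)
  have hset : {z : V → Bool | ∀ v ∈ U, z v = true} = (U : Set V).pi fun _ => {true} := by
    ext z
    simp
  rw [hset, layerμ, measureReal_def, Measure.pi_pi_finset, ENNReal.toReal_prod]
  exact prod_congr rfl fun v _ => bern_real_true (h0 v)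

theorem layerμ_real_linkEvent {q : V → ℝ} (h0 : ∀ v, 0 ≤ q v) (h1 : ∀ v, q v ≤ 1)
    {ℓ : V × V} (hℓ : ℓ.1 ≠ ℓ.2) : (layerμ q).real (linkEvent ℓ) = q ℓ.1 * q ℓ.2 := by
  rw [← prod_pair hℓ, ← layerμ_real_forall_active h0 h1]
  simp [linkEvent]

theorem layerμ_real_linkEvent_inter_le {q : V → ℝ} (h0 : ∀ v, 0 ≤ q v) (h1 : ∀ v, q v ≤ 1)
    {ℓ ℓ' : V × V} (hℓ : ℓ.1 ≠ ℓ.2) {v : V} (hv : v = ℓ'.1 ∨ v = ℓ'.2) (hv1 : v ≠ ℓ.1)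
    (hv2 : v ≠ ℓ.2) :
    (layerμ q).real (linkEvent ℓ ∩ linkEvent ℓ') ≤ q ℓ.1 * q ℓ.2 * q v := by
  have hsub : linkEvent ℓ ∩ linkEvent ℓ' ⊆ {z | ∀ u ∈ ({v, ℓ.1, ℓ.2} : Finset V), z u = true} := by
    rintro z ⟨hz, hz'⟩
    rcases hv with rfl | rfl <;> simp [hz.1, hz.2, hz'.1, hz'.2]
  calc (layerμ q).real (linkEvent ℓ ∩ linkEvent ℓ')
      ≤ ∏ u ∈ {v, ℓ.1, ℓ.2}, q u :=
        (measureReal_mono hsub).trans_eq (layerμ_real_forall_active h0 h1 _)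
    _ = q ℓ.1 * q ℓ.2 * q v := by
        rw [prod_insert (by simp [hv1, hv2]), prod_pair hℓ, mul_comm]

end SingleLayer

section LayerDecomposition

variable {V : Type}

theorem one_le_Wnd_iff {M : ℕ} (ℓ : V × V) (ω : Fin M × V → Bool) :
    1 ≤ Wnd ℓ ω ↔ ∃ m, Function.curry ω m ∈ linkEvent ℓ := by
  simp [Wnd, linkEvent, Nat.one_le_iff_ne_zero, Function.curry, filter_eq_empty_iff]

variable [Fintype V]

theorem nodeμ_map_curry (M : ℕ) {q : V → ℝ} (h0 : ∀ v, 0 ≤ q v) (h1 : ∀ v, q v ≤ 1) :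
    (nodeμ V M q).map (MeasurableEquiv.curry (Fin M) V Bool) =
      Measure.pi fun _ => layerμ q := by
  have := fun v => isProbabilityMeasure_bern (h0 v) (h1 v)
  simpa only [nodeμ, layerμ, Measure.infinitePi_eq_pi] using
    Measure.infinitePi_map_curry fun (_ : Fin M) v => bern (q v)

theorem nodeμ_real_config (M : ℕ) {q : V → ℝ} (h0 : ∀ v, 0 ≤ q v) (h1 : ∀ v, q v ≤ 1)
    (E : Finset (V × V)) (p : V × V → Prop) :
    (nodeμ V M q).real {ω | ∀ ℓ ∈ E, (1 ≤ Wnd ℓ ω ↔ p ℓ)} =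
      (Measure.pi fun _ : Fin M => layerμ q).real
        {ω | ∀ ℓ ∈ E, ((∃ m, ω m ∈ linkEvent ℓ) ↔ p ℓ)} := by
  simp only [measureReal_def, ← nodeμ_map_curry M h0 h1, MeasurableEquiv.map_apply, one_le_Wnd_iff]
  rfl

end LayerDecomposition

section VanishingActivation

theorem eventually_forall_le_one {α ι : Type*} [Finite ι] {l : Filter α} {f : α → ι → ℝ}
    (hf : ∀ i, Tendsto (fun a => f a i) l (nhds 0)) : ∀ᶠ a in l, ∀ i, f a i ≤ 1 :=
  eventually_all.2 fun i => (hf i).eventually_le_const one_pos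

variable {V : Type*} [Fintype V] {q : ℕ → V → ℝ}

theorem tendsto_mul_layerμ_linkEvent (hq0 : ∀ M v, 0 ≤ q M v)
    (hq : ∀ v, Tendsto (fun M => q M v) atTop (nhds 0)) {ℓ : V × V} (hℓ : ℓ.1 ≠ ℓ.2) {c : ℝ}
    (hc : Tendsto (fun M : ℕ => M * (q M ℓ.1 * q M ℓ.2)) atTop (nhds c)) :
    Tendsto (fun M : ℕ => M * (layerμ (q M)).real (linkEvent ℓ)) atTop (nhds c) := by
  refine hc.congr' ?_
  filter_upwards [eventually_forall_le_one hq] with M hM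
  rw [layerμ_real_linkEvent (hq0 M) hM hℓ]

theorem tendsto_mul_layerμ_linkEvent_inter (hq0 : ∀ M v, 0 ≤ q M v)
    (hq : ∀ v, Tendsto (fun M => q M v) atTop (nhds 0)) {ℓ ℓ' : V × V}
    (hℓ : ℓ.1 ≠ ℓ.2) (hℓ' : ℓ'.1 ≠ ℓ'.2) (hne : ℓ ≠ ℓ') (hswap : ℓ.swap ≠ ℓ') {c : ℝ}
    (hc : Tendsto (fun M : ℕ => M * (q M ℓ.1 * q M ℓ.2)) atTop (nhds c)) :
    Tendsto (fun M : ℕ => M * (layerμ (q M)).real (linkEvent ℓ ∩ linkEvent ℓ')) atTop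
      (nhds 0) := by
  obtain ⟨v, hv, hv1, hv2⟩ := exists_node_notMem_of_ne hℓ' hne hswap
  have hbound : Tendsto (fun M : ℕ => M * (q M ℓ.1 * q M ℓ.2) * q M v) atTop (nhds 0) := by
    simpa only [mul_zero] using hc.mul (hq v)
  refine squeeze_zero' (.of_forall fun M => by positivity) ?_ hbound
  filter_upwards [eventually_forall_le_one hq] with M hM
  rw [mul_assoc]
  exact mul_le_mul_of_nonneg_left (layerμ_real_linkEvent_inter_le (hq0 M) hM hℓ hv hv1 hv2)
    M.cast_nonneg

end VanishingActivation

theorem stmt12_general {V : Type} [Fintype V] {E : Finset (V × V)}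
    (hE1 : ∀ ℓ ∈ E, ℓ.1 ≠ ℓ.2) (hE2 : ∀ ℓ ∈ E, (ℓ.2, ℓ.1) ∉ E) {q : ℕ → V → ℝ}
    (hq0 : ∀ M v, 0 ≤ q M v) (hq : ∀ v, Tendsto (fun M => q M v) atTop (nhds 0))
    {c : V × V → ℝ}
    (hc : ∀ ℓ ∈ E, Tendsto (fun M : ℕ => M * (q M ℓ.1 * q M ℓ.2)) atTop (nhds (c ℓ)))
    (x : V × V → Bool) :
    Tendsto (fun M : ℕ =>
        ((nodeμ V M (q M)) {ω | ∀ ℓ ∈ E, (1 ≤ Wnd ℓ ω ↔ x ℓ = true)}).toReal) atTop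
      (nhds (∏ ℓ ∈ E, if x ℓ = true then 1 - Real.exp (-c ℓ) else Real.exp (-c ℓ))) := by
  have hle := eventually_forall_le_one hq
  have hpattern := tendsto_measureReal_pi_pattern (μ := fun M => layerμ (q M))
    (A := fun _ => linkEvent) (hle.mono fun M hM => isProbabilityMeasure_layerμ (hq0 M) hM)
    (fun _ _ => .of_discrete)
    (fun ℓ hℓ => tendsto_mul_layerμ_linkEvent hq0 hq (hE1 ℓ hℓ) (hc ℓ hℓ))
    (fun ℓ hℓ ℓ' hℓ' hne => tendsto_mul_layerμ_linkEvent_inter hq0 hq (hE1 ℓ hℓ) (hE1 ℓ' hℓ') hne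
      (fun hswap => hE2 ℓ hℓ (hswap.symm ▸ hℓ' : ℓ.swap ∈ E)) (hc ℓ hℓ)) fun ℓ => x ℓ = true
  refine hpattern.congr' ?_
  filter_upwards [hle] with M hM
  exact (nodeμ_real_config M (hq0 M) hM E _).symm

theorem tendsto_const_mul_rpow_neg_half (d : ℝ) :
    Tendsto (fun M : ℕ => d * (M : ℝ) ^ (-(1 / 2) : ℝ)) atTop (nhds 0) := by
  simpa only [mul_zero, Function.comp_apply] using
    ((tendsto_rpow_neg_atTop one_half_pos).comp tendsto_natCast_atTop_atTop).const_mul d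

theorem tendsto_mul_sq_const_mul_rpow_neg_half (d : ℝ) :
    Tendsto (fun M : ℕ => M * (d * (M : ℝ) ^ (-(1 / 2) : ℝ) * (d * (M : ℝ) ^ (-(1 / 2) : ℝ))))
      atTop (nhds (d ^ 2)) := by
  refine tendsto_const_nhds.congr' ?_
  filter_upwards [eventually_gt_atTop 0] with M hM
  have hM : (0 : ℝ) < M := Nat.cast_pos.2 hM
  rw [mul_mul_mul_comm, ← Real.rpow_add hM, show (-(1 / 2) + -(1 / 2) : ℝ) = -1 by norm_num,
    Real.rpow_neg_one, mul_left_comm, mul_inv_cancel₀ hM.ne', mul_one, sq]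

theorem prod_ite_exp_neg {ι : Type*} (E : Finset ι) (p : ι → Prop) [DecidablePred p] (c : ℝ) :
    ∏ i ∈ E, (if p i then 1 - Real.exp (-c) else Real.exp (-c)) =
      Real.exp (-c * (#E - #{i ∈ E | p i})) * (1 - Real.exp (-c)) ^ #{i ∈ E | p i} := by
  have hcard : (#E : ℝ) - #{i ∈ E | p i} = #{i ∈ E | ¬ p i} :=
    sub_eq_of_eq_add' (mod_cast (card_filter_add_card_filter_not p).symm)
  rw [prod_ite, prod_const, prod_const, hcard, mul_comm (-c), Real.exp_nat_mul, mul_comm]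

/-- with `p_ℓ = 1`, `q_i(M) = d M^{−1/2}` and `K = 1`, the probability of
any link configuration `x` converges to `e^{−d²(|E|−|𝓔|)} (1−e^{−d²})^{|𝓔|}`, where
`𝓔 = {ℓ ∈ E : x_ℓ = 1}`. -/
theorem stmt12 {V : Type} [Fintype V] [DecidableEq V] (E : Finset (V × V))
    (hE1 : ∀ ℓ ∈ E, ℓ.1 ≠ ℓ.2) (hE2 : ∀ ℓ ∈ E, (ℓ.2, ℓ.1) ∉ E)
    (d : ℝ) (hd : 0 < d) (x : (V × V) → Bool) :
    Tendsto (fun M : ℕ =>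
        ((nodeμ V M fun _ => d * (M : ℝ) ^ (-(1 / 2) : ℝ))
          {ω | ∀ ℓ ∈ E, (1 ≤ Wnd ℓ ω ↔ x ℓ = true)}).toReal) atTop
      (nhds (Real.exp (-(d ^ 2) * ((E.card : ℝ) - ((E.filter fun ℓ => x ℓ = true).card : ℝ)))
        * (1 - Real.exp (-(d ^ 2))) ^ (E.filter fun ℓ => x ℓ = true).card)) := by
  rw [← prod_ite_exp_neg E (fun ℓ => x ℓ = true)]
  exact stmt12_general hE1 hE2 (fun M _ => by positivity)
    (fun _ => tendsto_const_mul_rpow_neg_half d)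
    (fun _ _ => tendsto_mul_sq_const_mul_rpow_neg_half d) x
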